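/- arXiv:1711.08349 — 2 statements merged into one kernel-verified Lean document; each statement's English description precedes it below -/
import Mathlib

section
/- Let n be a natural number, k an integer, a₁, a₂ : Fin n → ℤ, and i, j : Fin n. For h ∈ {1,2} define bₕ to be aₕ if aₕ i ≤ aₕ j, and otherwise the function obtained from aₕ by exchanging the values at positions i and j (i.e., bₕ i = aₕ j, bₕ j = aₕ i, and bₕ t = aₕ t for t ∉ {i,j}). If |a₁ t − a₂ t| ≤ k for every t : Fin n, then |b₁ t − b₂ t| ≤ k for every t : Fin n. -/
/-!
Whether or not it swaps, a conditional swap leaves the minimum of the two entries at `i` and their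
maximum at `j`. So the two executions need not be compared branch by branch: `min` and `max` are
nonexpansive for the sup distance, and the other entries are untouched.
-/

section Update

variable {ι : Type*} [DecidableEq ι] {α β : ι → Type*}

theorem forall_rel_update (r : ∀ t, α t → β t → Prop) {f : ∀ t, α t} {g : ∀ t, β t}
    (hfg : ∀ t, r t (f t) (g t)) {i : ι} {x : α i} {y : β i} (hxy : r i x y) (t : ι) :
    r t (Function.update f i x t) (Function.update g i y t) := by
  obtain rfl | hti := eq_or_ne t i
  · simpa only [Function.update_self] using hxy
  · simpa only [Function.update_of_ne hti] using hfg t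

end Update

section CondSwap

variable {ι α : Type*} [DecidableEq ι] [LinearOrder α]

/-- The conditional swap (compare-exchange) performed by the inner loop of selection sort: exchange
the entries of `a` at `i` and `j` when `a i > a j`. Arrays are modelled as functions on an arbitrary
index type, and no order between `i` and `j` is assumed. -/
def condSwap (a : ι → α) (i j : ι) : ι → α :=
  if a i ≤ a j then a else Function.update (Function.update a i (a j)) j (a i)

theorem condSwap_eq_update_min_max (a : ι → α) (i j : ι) :
    condSwap a i j =
      Function.update (Function.update a i (min (a i) (a j))) j (max (a i) (a j)) := by
  unfold condSwap
  split_ifs with hij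
  · rw [min_eq_left hij, max_eq_right hij, Function.update_eq_self, Function.update_eq_self]
  · have hji : a j ≤ a i := (not_le.mp hij).le
    rw [min_eq_right hji, max_eq_left hji]

theorem cond_swap_preserves_pointwise_closeness_general [AddCommGroup α] [IsOrderedAddMonoid α]
    {k : α} {a₁ a₂ : ι → α} (h : ∀ t, |a₁ t - a₂ t| ≤ k) (i j t : ι) :
    |condSwap a₁ i j t - condSwap a₂ i j t| ≤ k := by
  have hmin : |min (a₁ i) (a₁ j) - min (a₂ i) (a₂ j)| ≤ k :=
    (abs_min_sub_min_le_max _ _ _ _).trans (max_le (h i) (h j))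
  have hmax : |max (a₁ i) (a₁ j) - max (a₂ i) (a₂ j)| ≤ k :=
    (abs_max_sub_max_le_max _ _ _ _).trans (max_le (h i) (h j))
  rw [condSwap_eq_update_min_max, condSwap_eq_update_min_max]
  let close (_ : ι) (x y : α) : Prop := |x - y| ≤ k
  exact forall_rel_update close (forall_rel_update close h hmin) hmax t

end CondSwap

theorem cond_swap_preserves_pointwise_closeness (n : ℕ) (k : ℤ)
    (a₁ a₂ : Fin n → ℤ) (i j : Fin n) (b₁ b₂ : Fin n → ℤ)
    (hb₁ : b₁ = if a₁ i ≤ a₁ j then a₁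
      else Function.update (Function.update a₁ i (a₁ j)) j (a₁ i))
    (hb₂ : b₂ = if a₂ i ≤ a₂ j then a₂
      else Function.update (Function.update a₂ i (a₂ j)) j (a₂ i))
    (h : ∀ t : Fin n, |a₁ t - a₂ t| ≤ k) :
    ∀ t : Fin n, |b₁ t - b₂ t| ≤ k := by
  subst hb₁ hb₂
  exact cond_swap_preserves_pointwise_closeness_general h i j
end

section
/- Let l₁ and l₂ be lists of integers of the same length and let k be an integer. Let s₁ and s₂ denote the nondecreasing rearrangements of l₁ and l₂ respectively (i.e., sₕ is a permutation of lₕ that is sorted with respect to ≤). If for every index i < length(l₁) we have |l₁[i] − l₂[i]| ≤ k, then for every index i < length(l₁) we have |s₁[i] − s₂[i]| ≤ k. -/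
/-!
Let `s₁`, `s₂` be the sorted versions of `l₁`, `l₂`, and let `R` be a relation preserved by
decreasing its first argument and increasing its second, such as `a - b ≤ k`. Then `R s₁[i] s₂[i]`
says that more than `i` entries of `s₁` are `R`-related to `y = s₂[i]`. This is a count, so it may
be made in the unsorted list `l₁`; there, every entry whose partner in `l₂` is at most `y` is
`R`-related to `y`, and more than `i` entries of `l₂` are at most `y`. The theorem is the
conjunction of the cases `a - b ≤ k` and `b - a ≤ k`.
-/

open List

section Forall₂

variable {α β : Type*} {R S : α → β → Prop} {l₁ : List α} {l₂ : List β}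

theorem forall₂_iff_getD (a : α) (b : β) :
    Forall₂ R l₁ l₂ ↔
      l₁.length = l₂.length ∧ ∀ i < l₁.length, R (l₁.getD i a) (l₂.getD i b) := by
  rw [forall₂_iff_get]
  refine and_congr_right fun hlen ↦ forall₂_congr fun i hi ↦ ?_
  simp [hi, hlen ▸ hi]

theorem forall₂_and_iff :
    Forall₂ (fun a b ↦ R a b ∧ S a b) l₁ l₂ ↔ Forall₂ R l₁ l₂ ∧ Forall₂ S l₁ l₂ := by
  simp only [forall₂_iff_get]
  grind

theorem countP_le_countP_of_forall₂ {p : α → Bool} {q : β → Bool}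
    (h : Forall₂ (fun a b ↦ p a → q b) l₁ l₂) : l₁.countP p ≤ l₂.countP q := by
  induction h with
  | nil => rfl
  | cons hpq _ ih => grind

end Forall₂

section Sorted

variable {α β : Type*}

theorem lt_countP_iff_of_pairwise {p : α → Bool} {s : List α} (hs : s.Pairwise fun a b ↦ p b → p a)
    {i : ℕ} (hi : i < s.length) : i < s.countP p ↔ p s[i] := by
  induction s generalizing i with
  | nil => simp at hi
  | cons a t ih =>
    obtain ⟨ha, ht⟩ := pairwise_cons.mp hs
    by_cases hpa : p a
    · cases i with
      | zero => simp [hpa]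
      | succ j => simpa [hpa] using ih ht (by simpa using hi)
    · have not_of_mem : ∀ b ∈ a :: t, ¬p b := by
        simpa [hpa] using fun b hb ↦ mt (ha b hb) hpa
      simpa [countP_eq_zero.mpr not_of_mem] using not_of_mem _ (getElem_mem hi)

theorem forall₂_of_perm_of_pairwise_le [Preorder α] [Preorder β] {R : α → β → Prop}
    (hR : ∀ ⦃a a' b b'⦄, a' ≤ a → b ≤ b' → R a b → R a' b')
    {l₁ s₁ : List α} {l₂ s₂ : List β} (h : Forall₂ R l₁ l₂)
    (hp₁ : s₁ ~ l₁) (hs₁ : s₁.Pairwise (· ≤ ·)) (hp₂ : s₂ ~ l₂) (hs₂ : s₂.Pairwise (· ≤ ·)) :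
    Forall₂ R s₁ s₂ := by
  classical
  refine forall₂_iff_get.mpr
    ⟨hp₁.length_eq.trans (h.length_eq.trans hp₂.length_eq.symm), fun i hi₁ hi₂ ↦ ?_⟩
  set y := s₂.get ⟨i, hi₂⟩
  have le_antitone : s₂.Pairwise fun a b ↦ decide (b ≤ y) → decide (a ≤ y) :=
    hs₂.imp fun hab ↦ by simpa using hab.trans
  have lt_count_le : i < s₂.countP (· ≤ y) :=
    (lt_countP_iff_of_pairwise le_antitone hi₂).mpr (by simp [y])
  have lt_count_related : i < s₁.countP (R · y) := calc
    i < s₂.countP (· ≤ y) := lt_count_le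
    _ = l₂.countP (· ≤ y) := hp₂.countP_eq _
    _ ≤ l₁.countP (R · y) := countP_le_countP_of_forall₂ <|
      h.flip.imp fun b a hab ↦ by simpa using fun hb ↦ hR le_rfl hb hab
    _ = s₁.countP (R · y) := (hp₁.countP_eq _).symm
  have related_antitone : s₁.Pairwise fun a b ↦ decide (R b y) → decide (R a y) :=
    hs₁.imp fun hab ↦ by simpa using hR hab le_rfl
  simpa using (lt_countP_iff_of_pairwise related_antitone hi₁).mp lt_count_related

end Sorted

theorem sorting_k_lipschitz_general {α : Type*} [AddCommGroup α] [LinearOrder α]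
    [IsOrderedAddMonoid α] {l₁ l₂ s₁ s₂ : List α} {k : α}
    (hp₁ : s₁ ~ l₁) (hs₁ : s₁.Pairwise (· ≤ ·)) (hp₂ : s₂ ~ l₂) (hs₂ : s₂.Pairwise (· ≤ ·))
    (h : Forall₂ (fun a b ↦ |a - b| ≤ k) l₁ l₂) :
    Forall₂ (fun a b ↦ |a - b| ≤ k) s₁ s₂ := by
  have sub_le_mono ⦃a a' b b' : α⦄ (ha : a' ≤ a) (hb : b ≤ b') (hab : a - b ≤ k) : a' - b' ≤ k :=
    (sub_le_sub ha hb).trans hab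
  simp only [abs_sub_le_iff, forall₂_and_iff] at h ⊢
  exact ⟨forall₂_of_perm_of_pairwise_le sub_le_mono h.1 hp₁ hs₁ hp₂ hs₂,
    (forall₂_of_perm_of_pairwise_le sub_le_mono h.2.flip hp₂ hs₂ hp₁ hs₁).flip⟩

theorem sorting_k_lipschitz (l₁ l₂ s₁ s₂ : List ℤ) (k : ℤ)
    (hlen : l₁.length = l₂.length)
    (hp₁ : s₁.Perm l₁) (hs₁ : s₁.Pairwise (· ≤ ·))
    (hp₂ : s₂.Perm l₂) (hs₂ : s₂.Pairwise (· ≤ ·))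
    (h : ∀ i : ℕ, i < l₁.length → |l₁.getD i 0 - l₂.getD i 0| ≤ k) :
    ∀ i : ℕ, i < l₁.length → |s₁.getD i 0 - s₂.getD i 0| ≤ k := by
  have sorted_close := sorting_k_lipschitz_general hp₁ hs₁ hp₂ hs₂
    ((forall₂_iff_getD 0 0).mpr ⟨hlen, h⟩)
  exact hp₁.length_eq ▸ ((forall₂_iff_getD 0 0).mp sorted_close).2
end
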